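/- Let M be a σ-finite von Neumann algebra with a faithful normal semifinite trace τ and let α ∈ M^n (n ≥ 1) be a commuting self-adjoint n-tuple. Then there exists an increasing sequence (p_k)_{k≥0} of τ-finite projections in M such that p_k converges to 1 in the strong operator topology (i.e., p_k ξ → ξ for every ξ ∈ H) and ‖[p_k, α]‖ → 0 as k → ∞. -/

import Mathlib

open ContinuousLinearMap Filter Topology

noncomputable section

namespace VNA

variable {H : Type*} [NormedAddCommGroup H] [InnerProductSpace ℂ H] [CompleteSpace H]

/-- A projection (orthogonal projection): idempotent and self-adjoint. -/
def IsProjection (p : H →L[ℂ] H) : Prop := p * p = p ∧ star p = p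

/-- Murray–von Neumann equivalence of `p` and `q` relative to `M`. -/
def MvNE (M : VonNeumannAlgebra H) (p q : H →L[ℂ] H) : Prop :=
  ∃ v ∈ M, star v * v = p ∧ v * star v = q

/-- `p` is a finite projection of `M`; for projections, `q ≤ p` is the range
containment `p * q = q`. -/
def IsFiniteProjection (M : VonNeumannAlgebra H) (p : H →L[ℂ] H) : Prop :=
  p ∈ M ∧ IsProjection p ∧
    ∀ q, q ∈ M → IsProjection q → p * q = q → MvNE M q p → q = p

def IsInfiniteProjection (M : VonNeumannAlgebra H) (p : H →L[ℂ] H) : Prop :=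
  p ∈ M ∧ IsProjection p ∧ ¬ IsFiniteProjection M p

/-- The centre `Z(M) = M ∩ M'` as a set. -/
def centerSet (M : VonNeumannAlgebra H) : Set (H →L[ℂ] H) :=
  {z | z ∈ M ∧ ∀ y ∈ M, z * y = y * z}

def IsCentralProjection (M : VonNeumannAlgebra H) (z : H →L[ℂ] H) : Prop :=
  IsProjection z ∧ z ∈ centerSet M

def IsProperlyInfiniteProjection (M : VonNeumannAlgebra H) (p : H →L[ℂ] H) : Prop :=
  p ∈ M ∧ IsProjection p ∧
    ∀ z, IsCentralProjection M z → z * p ≠ 0 → IsInfiniteProjection M (z * p)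

def ProperlyInfinite (M : VonNeumannAlgebra H) : Prop :=
  IsProperlyInfiniteProjection M 1

/-- `M` is σ-finite: every family of pairwise orthogonal nonzero projections in `M`
is countable. -/
def SigmaFinite (M : VonNeumannAlgebra H) : Prop :=
  ∀ S : Set (H →L[ℂ] H), (∀ p ∈ S, p ∈ M ∧ IsProjection p ∧ p ≠ 0) →
    (∀ p ∈ S, ∀ q ∈ S, p ≠ q → p * q = 0) → S.Countable

/-- A faithful normal semifinite trace on `M`. -/
structure IsFNSTrace (M : VonNeumannAlgebra H) (τ : (H →L[ℂ] H) → ENNReal) : Prop where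
  map_zero : τ 0 = 0
  additive : ∀ x y : H →L[ℂ] H, x ∈ M → y ∈ M → 0 ≤ x → 0 ≤ y → τ (x + y) = τ x + τ y
  homogeneous : ∀ (c : ℝ) (x : H →L[ℂ] H), 0 ≤ c → x ∈ M → 0 ≤ x →
    τ (c • x) = ENNReal.ofReal c * τ x
  tracial : ∀ x : H →L[ℂ] H, x ∈ M → τ (star x * x) = τ (x * star x)
  faithful : ∀ x : H →L[ℂ] H, x ∈ M → 0 ≤ x → τ x = 0 → x = 0
  normal : ∀ (ι : Type*) [Preorder ι] [IsDirected ι (· ≤ ·)] [Nonempty ι]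
      (f : ι → (H →L[ℂ] H)) (x : H →L[ℂ] H),
      (∀ i, f i ∈ M) → (∀ i, 0 ≤ f i) → Monotone f → (∃ C : ℝ, ∀ i, ‖f i‖ ≤ C) →
      x ∈ M → IsLUB (Set.range f) x → τ x = ⨆ i, τ (f i)
  semifinite : ∀ x : H →L[ℂ] H, x ∈ M → 0 ≤ x → x ≠ 0 →
      ∃ y, y ∈ M ∧ 0 ≤ y ∧ y ≤ x ∧ y ≠ 0 ∧ τ y < ⊤

/-- `p` is a `τ`-finite projection of `M`. -/
def IsTauFiniteProjection (M : VonNeumannAlgebra H) (τ : (H →L[ℂ] H) → ENNReal)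
    (p : H →L[ℂ] H) : Prop :=
  p ∈ M ∧ IsProjection p ∧ τ p < ⊤

/-- `F₁⁺(M) = {x ∈ M : 0 ≤ x ≤ 1, px = x for some τ-finite projection p}`. -/
def F1plus (M : VonNeumannAlgebra H) (τ : (H →L[ℂ] H) → ENNReal) : Set (H →L[ℂ] H) :=
  {x | x ∈ M ∧ 0 ≤ x ∧ x ≤ 1 ∧ ∃ p, IsTauFiniteProjection M τ p ∧ p * x = x}

/-- `K(M,τ)`: operator-norm closure of the τ-finitely supported elements of `M`. -/
def Kideal (M : VonNeumannAlgebra H) (τ : (H →L[ℂ] H) → ENNReal) : Set (H →L[ℂ] H) :=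
  closure {x | x ∈ M ∧ ∃ p, IsTauFiniteProjection M τ p ∧ p * x = x}

/-- A commuting self-adjoint `n`-tuple in `M`. -/
def IsCommutingSelfAdjointTuple (M : VonNeumannAlgebra H) {n : ℕ}
    (α : Fin n → (H →L[ℂ] H)) : Prop :=
  (∀ j, α j ∈ M) ∧ (∀ j, star (α j) = α j) ∧ ∀ i j, α i * α j = α j * α i

/-- `‖[r,α]‖ = max_{1≤j≤n} ‖[r, α(j)]‖`. -/
def commNorm {n : ℕ} (α : Fin n → (H →L[ℂ] H)) (r : H →L[ℂ] H) : ℝ :=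
  ⨆ j, ‖r * α j - α j * r‖

/-- `WZ*(S)`: the double commutant in `B(H)` of `S ∪ Z(M)`. -/
def WZstar (M : VonNeumannAlgebra H) (S : Set (H →L[ℂ] H)) : Set (H →L[ℂ] H) :=
  Set.centralizer (Set.centralizer (S ∪ centerSet M))

/-- A diagonal operator of `M`: `d = Σ_k λ_k p_k` with pairwise orthogonal
projections `p_k ∈ M`, the series converging in the strong operator topology. -/
def IsDiagonal (M : VonNeumannAlgebra H) (d : H →L[ℂ] H) : Prop :=
  ∃ (p : ℕ → H →L[ℂ] H) (lam : ℕ → ℂ),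
    (∀ k, p k ∈ M) ∧ (∀ k, IsProjection (p k)) ∧
    (∀ k l, k ≠ l → p k * p l = 0) ∧
    ∀ ξ : H, HasSum (fun k => lam k • (p k ξ)) (d ξ)

end VNA

/-!
A self-adjoint operator `x` of norm at most `L` is `x = s|x|` for a symmetry `s` in its bicommutant,
and `|x| - L/2` has norm at most `L/2`. Iterating, `x` is a norm limit of polynomials in finitely
many symmetries from its bicommutant, so up to `ε` the tuple `α` is a tuple of polynomials in
finitely many commuting symmetries of `M`.

If `s` is a symmetry and `e` a projection, then `e ∨ ses` dominates `e`, commutes with `s`, and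
still commutes with every operator that commutes with both `e` and `s`. It is `τ`-finite when `e`
is: for projections `e`, `f`, with `R` the range projection of `|e - f|`, the symmetry of the polar
decomposition of `e - f` conjugates `eR` to `(1 - f)R`, and `e ∨ f ≤ f + (1 - f)R`, whence
`τ(e ∨ f) ≤ τ(e) + τ(f)`. Treating the symmetries one after the other, every `τ`-finite projection
lies below a `τ`-finite projection that almost commutes with `α`.

By semifiniteness and `σ`-finiteness, a maximal orthogonal family of nonzero `τ`-finite projections
is countable and sums to `1`. Absorbing its members one by one gives the sequence.
-/

namespace VNA

theorem exists_maximal_pairwise {X : Type*} (T : Set X) (r : X → X → Prop) :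
    ∃ S, Maximal (fun S : Set X => S ⊆ T ∧ S.Pairwise r) S := by
  refine zorn_subset _ fun C hC hchain => ⟨⋃₀ C, ⟨Set.sUnion_subset fun S hS => (hC hS).1, ?_⟩,
    fun S => Set.subset_sUnion_of_mem⟩
  exact (Set.pairwise_sUnion hchain.directedOn).2 fun S hS => (hC hS).2

theorem bicommutant_subset_bicommutant {R : Type*} [Mul R] {S T : Set R}
    (h : S ⊆ Set.centralizer (Set.centralizer T)) :
    Set.centralizer (Set.centralizer S) ⊆ Set.centralizer (Set.centralizer T) := by
  simpa only [Set.centralizer_centralizer_centralizer] using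
    Set.centralizer_subset (Set.centralizer_subset h)

theorem norm_commutator_le {A : Type*} [SeminormedRing A] {p a d : A} (hp : ‖p‖ ≤ 1)
    (hpd : Commute p d) : ‖p * a - a * p‖ ≤ 2 * ‖a - d‖ := by
  calc ‖p * a - a * p‖ = ‖p * (a - d) - (a - d) * p‖ := by
        rw [mul_sub, sub_mul, hpd.eq, sub_sub_sub_cancel_right]
    _ ≤ ‖p‖ * ‖a - d‖ + ‖a - d‖ * ‖p‖ :=
        (norm_sub_le _ _).trans (add_le_add (norm_mul_le _ _) (norm_mul_le _ _))
    _ ≤ 1 * ‖a - d‖ + ‖a - d‖ * 1 := by gcongr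
    _ = 2 * ‖a - d‖ := by ring

theorem mul_eq_zero_of_le {A : Type*} [NonUnitalCStarAlgebra A] [PartialOrder A]
    [StarOrderedRing A] {x y b : A} (hx : 0 ≤ x) (hxy : x ≤ y) (hyb : y * b = 0) :
    x * b = 0 := by
  obtain ⟨c, rfl⟩ := CStarAlgebra.nonneg_iff_eq_star_mul_self.1 hx
  have hle : star b * (star c * c) * b ≤ 0 := by
    calc star b * (star c * c) * b ≤ star b * y * b := star_left_conjugate_le_conjugate hxy b
      _ = 0 := by rw [mul_assoc, hyb, mul_zero]
  have hcb : star (c * b) * (c * b) = 0 := by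
    rw [star_mul, mul_assoc, ← mul_assoc (star c), ← mul_assoc]
    exact hle.antisymm (star_left_conjugate_nonneg hx b)
  rw [mul_assoc, CStarRing.star_mul_self_eq_zero_iff _ |>.1 hcb, mul_zero]

theorem posPart_mem_bicommutant {A : Type*} [CStarAlgebra A] (x : A) :
    x⁺ ∈ Set.centralizer (Set.centralizer {x}) := fun b hb => by
  have hcomm : Commute x b := hb x rfl
  rw [CFC.posPart_def]
  exact (hcomm.cfcₙ_real _).symm.eq

section CStarAlgebra

variable {A : Type*} [CStarAlgebra A] [PartialOrder A] [StarOrderedRing A]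

theorem isStarProjection_le_of_smul_le {p q : A} (hp : IsStarProjection p) (hq : IsStarProjection q)
    {δ : ℝ} (hδ : 0 < δ) (h : δ • p ≤ q) : p ≤ q := by
  have hzero := mul_eq_zero_of_le (smul_nonneg hδ.le hp.nonneg) h hq.mul_one_sub_self
  rw [smul_mul_assoc, smul_eq_zero_iff_right hδ.ne', mul_sub, mul_one, sub_eq_zero] at hzero
  exact (hp.le_iff_mul_eq_left hq).2 hzero.symm

theorem commute_abs_sub_left {e f : A} (he : IsStarProjection e) (hf : IsStarProjection f) :
    Commute (CFC.abs (e - f)) e := by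
  have hsq : Commute (star (e - f) * (e - f)) e := by
    have hee := he.isIdempotentElem.eq
    have hff := hf.isIdempotentElem.eq
    rw [(he.isSelfAdjoint.sub hf.isSelfAdjoint).star_eq]
    simp only [commute_iff_eq, mul_sub, sub_mul, mul_assoc, hee, hff]
    simp only [← mul_assoc, hee]
    abel
  exact hsq.cfcₙ_nnreal _

theorem commute_abs_sub_right {e f : A} (he : IsStarProjection e) (hf : IsStarProjection f) :
    Commute (CFC.abs (e - f)) f := by
  rw [← CFC.abs_neg, neg_sub]
  exact commute_abs_sub_left hf he

theorem norm_abs_sub_algebraMap_le {L : ℝ} {x : A} (hx : IsSelfAdjoint x) (hL : ‖x‖ ≤ L) :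
    ‖CFC.abs x - algebraMap ℝ A (L / 2)‖ ≤ L / 2 := by
  have hcfc : CFC.abs x - algebraMap ℝ _ (L / 2) = cfc (fun t : ℝ => ‖t‖ - L / 2) x := by
    rw [cfc_sub (fun t : ℝ => ‖t‖) (fun _ => L / 2) x, cfc_const (L / 2) x, CFC.abs_eq_cfc_norm x]
  rw [hcfc]
  refine norm_cfc_le (by linarith [norm_nonneg x]) fun t ht => ?_
  have htL : ‖t‖ ≤ L := (norm_apply_le_norm_cfc id x ht).trans (by rwa [cfc_id ℝ x])
  rw [Real.norm_eq_abs, abs_le]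
  constructor <;> linarith [norm_nonneg t]

theorem abs_mem_bicommutant {x : A} (hx : IsSelfAdjoint x) :
    CFC.abs x ∈ Set.centralizer (Set.centralizer {x}) := fun y hy => by
  have hxy : Commute x y := hy x rfl
  have hxy_star : Commute x (star y) := by simpa [hx.star_eq] using hxy.star_star
  exact (hxy.cfcAbs_right hxy_star).eq

end CStarAlgebra

section RangeProj

variable {𝕜 E : Type*} [RCLike 𝕜] [NormedAddCommGroup E] [InnerProductSpace 𝕜 E] [CompleteSpace E]
  {a b c : E →L[𝕜] E}

/-- The range projection of an operator: the orthogonal projection onto the closure of its range.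
The supremum of two projections `e` and `f` is encoded as `rangeProj (e + f)`. -/
def rangeProj (a : E →L[𝕜] E) : E →L[𝕜] E :=
  a.range.topologicalClosure.starProjection

theorem isStarProjection_rangeProj (a : E →L[𝕜] E) : IsStarProjection (rangeProj a) :=
  isStarProjection_starProjection

theorem rangeProj_mul_self (a : E →L[𝕜] E) : rangeProj a * a = a := by
  ext ξ
  exact Submodule.starProjection_eq_self_iff.2
    (Submodule.le_topologicalClosure _ (LinearMap.mem_range_self _ ξ))

theorem mul_rangeProj_eq_iff : b * rangeProj a = c * rangeProj a ↔ b * a = c * a := by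
  refine ⟨fun h => ?_, fun h => ?_⟩
  · rw [← rangeProj_mul_self a, ← mul_assoc, h, mul_assoc]
  · have hclosure : a.range.topologicalClosure ≤ (b - c).ker := by
      refine Submodule.topologicalClosure_minimal _ ?_ (b - c).isClosed_ker
      rintro _ ⟨ξ, rfl⟩
      simpa [sub_eq_zero] using DFunLike.congr_fun h ξ
    ext ξ
    exact sub_eq_zero.1 (hclosure (Submodule.starProjection_apply_mem _ ξ))

theorem mul_rangeProj_eq_zero_iff : b * rangeProj a = 0 ↔ b * a = 0 := by
  simpa using mul_rangeProj_eq_iff (a := a) (b := b) (c := 0)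

theorem mul_rangeProj_self (ha : IsSelfAdjoint a) : a * rangeProj a = a := by
  simpa [ha.star_eq, (isStarProjection_rangeProj a).isSelfAdjoint.star_eq]
    using congrArg star (rangeProj_mul_self a)

theorem commute_rangeProj (ha : IsSelfAdjoint a) (hab : Commute a b) :
    Commute (rangeProj a) b := by
  have hR := (isStarProjection_rangeProj a).isSelfAdjoint.star_eq
  have hinv : ∀ {b : E →L[𝕜] E}, Commute a b → rangeProj a * b * rangeProj a = b * rangeProj a :=
    fun {b} hb => mul_rangeProj_eq_iff.2 <| by
      rw [mul_assoc, ← hb.eq, ← mul_assoc, rangeProj_mul_self]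
  have hstar : Commute a (star b) := by simpa [ha.star_eq] using hab.star_star
  have hinv_star := congrArg star (hinv hstar)
  simp only [star_mul, star_star, hR, ← mul_assoc] at hinv_star
  exact hinv_star.symm.trans (hinv hab)

theorem rangeProj_mem_bicommutant (ha : IsSelfAdjoint a) :
    rangeProj a ∈ Set.centralizer (Set.centralizer {a}) := fun _ hb =>
  (commute_rangeProj ha (hb a rfl)).symm

end RangeProj

variable {H : Type*} [NormedAddCommGroup H] [InnerProductSpace ℂ H] [CompleteSpace H]

theorem mul_rangeProj_of_le {x y : H →L[ℂ] H} (hx : 0 ≤ x) (hxy : x ≤ y) :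
    x * rangeProj y = x := by
  have hy : y * (1 - rangeProj y) = 0 := by
    rw [mul_sub, mul_one, mul_rangeProj_self (.of_nonneg (hx.trans hxy)), sub_self]
  have h := mul_eq_zero_of_le hx hxy hy
  rwa [mul_sub, mul_one, sub_eq_zero, eq_comm] at h

section SupProjection

variable {e f q : H →L[ℂ] H}

theorem le_rangeProj_add_left (he : IsStarProjection e) (hf : IsStarProjection f) :
    e ≤ rangeProj (e + f) :=
  (he.le_iff_mul_eq_left (isStarProjection_rangeProj _)).2 <|
    mul_rangeProj_of_le he.nonneg (le_add_of_nonneg_right hf.nonneg)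

theorem le_rangeProj_add_right (he : IsStarProjection e) (hf : IsStarProjection f) :
    f ≤ rangeProj (e + f) :=
  add_comm f e ▸ le_rangeProj_add_left hf he

theorem rangeProj_add_le (he : IsStarProjection e) (hf : IsStarProjection f)
    (hq : IsStarProjection q) (heq : e ≤ q) (hfq : f ≤ q) : rangeProj (e + f) ≤ q := by
  have hsum : q * (e + f) = 1 * (e + f) := by
    rw [mul_add, (he.le_iff_mul_eq_right hq).1 heq, (hf.le_iff_mul_eq_right hq).1 hfq, one_mul]
  exact ((isStarProjection_rangeProj _).le_iff_mul_eq_right hq).2 <| by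
    rw [mul_rangeProj_eq_iff.2 hsum, one_mul]

end SupProjection

section Symmetry

/-- A symmetry, i.e. a self-adjoint unitary. Self-adjoint operators are approximated by polynomials
in commuting symmetries. -/
structure IsSymmetry {R : Type*} [Monoid R] [Star R] (s : R) : Prop where
  isSelfAdjoint : IsSelfAdjoint s
  mul_self : s * s = 1

theorem IsSymmetry.mem_unitary {R : Type*} [Monoid R] [StarMul R] {s : R} (hs : IsSymmetry s) :
    s ∈ unitary R := by
  simp [Unitary.mem_iff, hs.isSelfAdjoint.star_eq, hs.mul_self]

theorem isSymmetry_two_mul_sub_one {R : Type*} [Ring R] [StarRing R] {p : R}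
    (hp : IsStarProjection p) : IsSymmetry (2 * p - 1) := by
  have hsa : IsSelfAdjoint (2 * p - 1) := by
    simpa [two_mul] using (hp.isSelfAdjoint.add hp.isSelfAdjoint).sub (.one R)
  exact ⟨hsa, by simpa [hsa.star_eq] using
    (Unitary.mem_iff.1 hp.two_mul_sub_one_mem_unitary).1⟩

theorem rangeProj_posPart_mem_bicommutant (x : H →L[ℂ] H) :
    rangeProj x⁺ ∈ Set.centralizer (Set.centralizer {x}) :=
  bicommutant_subset_bicommutant (Set.singleton_subset_iff.2 (posPart_mem_bicommutant x))
    (rangeProj_mem_bicommutant (.of_nonneg (CFC.posPart_nonneg x)))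

theorem rangeProj_posPart_mul_negPart (x : H →L[ℂ] H) : rangeProj x⁺ * x⁻ = 0 := by
  have hneg : IsSelfAdjoint x⁻ := .of_nonneg (CFC.negPart_nonneg x)
  have h := mul_rangeProj_eq_zero_iff.2 (CFC.negPart_mul_posPart x)
  simpa [hneg.star_eq, (isStarProjection_rangeProj _).isSelfAdjoint.star_eq] using congrArg star h

theorem exists_isSymmetry_mul_abs_eq {x : H →L[ℂ] H} (hx : IsSelfAdjoint x) :
    ∃ s ∈ Set.centralizer (Set.centralizer {x}), IsSymmetry s ∧ s * CFC.abs x = x := by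
  set z := rangeProj x⁺ with hz
  have hzx : z ∈ Set.centralizer (Set.centralizer {x}) := rangeProj_posPart_mem_bicommutant x
  refine ⟨2 * z - 1, fun b hb => ?_, isSymmetry_two_mul_sub_one (isStarProjection_rangeProj _), ?_⟩
  · have hcomm : Commute b z := hzx b hb
    exact (((Commute.ofNat_right b 2).mul_right hcomm).sub_right (.one_right b)).eq
  · calc (2 * z - 1) * CFC.abs x = 2 * (z * x⁺ + z * x⁻) - (x⁺ + x⁻) := by
          rw [← CFC.posPart_add_negPart x]; noncomm_ring
      _ = x⁺ - x⁻ := by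
          rw [hz, rangeProj_mul_self, rangeProj_posPart_mul_negPart]; noncomm_ring
      _ = x := CFC.posPart_sub_negPart x

theorem exists_finite_isSymmetry_norm_sub_le (m : ℕ) {L : ℝ} {x : H →L[ℂ] H}
    (hx : IsSelfAdjoint x) (hL : ‖x‖ ≤ L) :
    ∃ S : Set (H →L[ℂ] H), S.Finite ∧ (∀ s ∈ S, IsSymmetry s) ∧
      S ⊆ Set.centralizer (Set.centralizer {x}) ∧
      ∃ d ∈ Algebra.adjoin ℝ S, ‖x - d‖ ≤ L / 2 ^ m := by
  induction m generalizing L x with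
  | zero => exact ⟨∅, Set.finite_empty, by simp, by simp, 0, zero_mem _, by simpa using hL⟩
  | succ m ih =>
    obtain ⟨s, hsx, hs, hsabs⟩ := exists_isSymmetry_mul_abs_eq hx
    set c := algebraMap ℝ (H →L[ℂ] H) (L / 2)
    have hbx : CFC.abs x - c ∈ Set.centralizer (Set.centralizer {x}) := fun y hy =>
      (Commute.sub_right (abs_mem_bicommutant hx y hy) (Algebra.commutes (L / 2) y).symm).eq
    obtain ⟨S, hSfin, hSsymm, hSb, d, hd, hdist⟩ :=
      ih ((IsSelfAdjoint.of_nonneg (CFC.abs_nonneg x)).sub (.algebraMap _ (.all _)))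
        (norm_abs_sub_algebraMap_le hx hL)
    refine ⟨insert s S, hSfin.insert s, by simpa [hs] using hSsymm,
      Set.insert_subset hsx (hSb.trans
        (bicommutant_subset_bicommutant (Set.singleton_subset_iff.2 hbx))),
      s * (d + c), ?_, ?_⟩
    · exact mul_mem (Algebra.subset_adjoin (Set.mem_insert s S))
        (add_mem (Algebra.adjoin_mono (Set.subset_insert s S) hd) (Subalgebra.algebraMap_mem _ _))
    · calc ‖x - s * (d + c)‖ = ‖s * (CFC.abs x - c - d)‖ := by
            rw [sub_sub, mul_sub, hsabs, add_comm]
        _ = ‖CFC.abs x - c - d‖ := CStarRing.norm_mem_unitary_mul _ hs.mem_unitary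
        _ ≤ L / 2 / 2 ^ m := hdist
        _ = L / 2 ^ (m + 1) := by rw [pow_succ', div_div]

theorem exists_finite_isSymmetry_norm_sub_lt {x : H →L[ℂ] H} (hx : IsSelfAdjoint x) {ε : ℝ}
    (hε : 0 < ε) :
    ∃ S : Set (H →L[ℂ] H), S.Finite ∧ (∀ s ∈ S, IsSymmetry s) ∧
      S ⊆ Set.centralizer (Set.centralizer {x}) ∧
      ∃ d ∈ Algebra.adjoin ℝ S, ‖x - d‖ < ε := by
  obtain ⟨m, hm⟩ := pow_unbounded_of_one_lt (‖x‖ / ε) one_lt_two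
  obtain ⟨S, hfin, hsymm, hSx, d, hd, hxd⟩ := exists_finite_isSymmetry_norm_sub_le m hx le_rfl
  exact ⟨S, hfin, hsymm, hSx, d, hd, hxd.trans_lt ((div_lt_comm₀ hε (by positivity)).1 hm)⟩

end Symmetry

theorem isProjection_iff_isStarProjection {p : H →L[ℂ] H} :
    IsProjection p ↔ IsStarProjection p :=
  ⟨fun h => ⟨h.1, h.2⟩, fun h => ⟨h.isIdempotentElem, h.isSelfAdjoint⟩⟩

theorem bicommutant_subset {M : VonNeumannAlgebra H} {S : Set (H →L[ℂ] H)}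
    (hS : S ⊆ (M : Set (H →L[ℂ] H))) :
    Set.centralizer (Set.centralizer S) ⊆ (M : Set (H →L[ℂ] H)) := by
  simpa using Set.centralizer_subset (Set.centralizer_subset hS)

theorem rangeProj_mem {M : VonNeumannAlgebra H} {a : H →L[ℂ] H} (ha : IsSelfAdjoint a)
    (haM : a ∈ M) : rangeProj a ∈ M :=
  bicommutant_subset (Set.singleton_subset_iff.2 haM) (rangeProj_mem_bicommutant ha)

/-- A semifinite trace on the positive cone of `M`, not assumed faithful or normal. As in
`IsFNSTrace`, it is encoded by a function on all operators, whose values off that cone are junk. -/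
structure IsSemifiniteTrace (M : VonNeumannAlgebra H) (τ : (H →L[ℂ] H) → ENNReal) : Prop where
  additive : ∀ x y : H →L[ℂ] H, x ∈ M → y ∈ M → 0 ≤ x → 0 ≤ y → τ (x + y) = τ x + τ y
  homogeneous : ∀ (c : ℝ) (x : H →L[ℂ] H), 0 ≤ c → x ∈ M → 0 ≤ x →
    τ (c • x) = ENNReal.ofReal c * τ x
  tracial : ∀ x : H →L[ℂ] H, x ∈ M → τ (star x * x) = τ (x * star x)
  semifinite : ∀ x : H →L[ℂ] H, x ∈ M → 0 ≤ x → x ≠ 0 →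
    ∃ y, y ∈ M ∧ 0 ≤ y ∧ y ≤ x ∧ y ≠ 0 ∧ τ y < ⊤

theorem IsFNSTrace.isSemifiniteTrace {M : VonNeumannAlgebra H} {τ : (H →L[ℂ] H) → ENNReal}
    (hτ : IsFNSTrace M τ) : IsSemifiniteTrace M τ where
  additive := hτ.additive
  homogeneous := hτ.homogeneous
  tracial := hτ.tracial
  semifinite := hτ.semifinite

section Trace

variable {M : VonNeumannAlgebra H} {τ : (H →L[ℂ] H) → ENNReal}

theorem IsTauFiniteProjection.isStarProjection {p : H →L[ℂ] H}
    (hp : IsTauFiniteProjection M τ p) : IsStarProjection p :=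
  isProjection_iff_isStarProjection.1 hp.2.1

namespace IsSemifiniteTrace

theorem map_zero (hτ : IsSemifiniteTrace M τ) : τ 0 = 0 := by
  simpa using hτ.homogeneous 0 0 le_rfl (zero_mem M) le_rfl

theorem mono (hτ : IsSemifiniteTrace M τ) {x y : H →L[ℂ] H} (hx : x ∈ M) (hy : y ∈ M)
    (hx0 : 0 ≤ x) (hxy : x ≤ y) : τ x ≤ τ y := by
  have hadd := hτ.additive x (y - x) hx (sub_mem hy hx) hx0 (sub_nonneg.2 hxy)
  rw [add_sub_cancel] at hadd
  exact hadd ▸ le_self_add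

theorem map_symmetry_conj (hτ : IsSemifiniteTrace M τ) {s p : H →L[ℂ] H} (hsM : s ∈ M)
    (hs : IsSymmetry s) (hpM : p ∈ M) (hp : IsStarProjection p) : τ (s * p * s) = τ p := by
  have hpp := hp.isIdempotentElem.eq
  have htr := hτ.tracial (p * s) (mul_mem hpM hsM)
  rw [star_mul, hs.isSelfAdjoint.star_eq, hp.isSelfAdjoint.star_eq, mul_assoc, ← mul_assoc p p,
    hpp, mul_assoc p, ← mul_assoc s s, hs.mul_self, one_mul, hpp, ← mul_assoc] at htr
  exact htr

theorem isTauFiniteProjection_zero (hτ : IsSemifiniteTrace M τ) : IsTauFiniteProjection M τ 0 :=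
  ⟨zero_mem M, isProjection_iff_isStarProjection.2 (.zero _), by simp [hτ.map_zero]⟩

theorem isTauFiniteProjection_symmetry_conj (hτ : IsSemifiniteTrace M τ) {s p : H →L[ℂ] H}
    (hsM : s ∈ M) (hs : IsSymmetry s) (hp : IsTauFiniteProjection M τ p) :
    IsTauFiniteProjection M τ (s * p * s) := by
  refine ⟨mul_mem (mul_mem hsM hp.1) hsM, ⟨?_, ?_⟩, ?_⟩
  · calc s * p * s * (s * p * s) = s * (p * (s * s) * p) * s := by noncomm_ring
      _ = s * p * s := by rw [hs.mul_self, mul_one, hp.2.1.1]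
  · simp [hs.isSelfAdjoint.star_eq, hp.2.1.2, mul_assoc]
  · exact (hτ.map_symmetry_conj hsM hs hp.1 hp.isStarProjection).trans_lt hp.2.2

end IsSemifiniteTrace

end Trace

section TwoProjections

variable {e f : H →L[ℂ] H}

theorem isStarProjection_one_sub_mul_rangeProj_abs_sub (he : IsStarProjection e)
    (hf : IsStarProjection f) : IsStarProjection ((1 - f) * rangeProj (CFC.abs (e - f))) :=
  hf.one_sub.mul (isStarProjection_rangeProj _) <| .symm <|
    (Commute.one_right _).sub_right <|
      commute_rangeProj (.of_nonneg (CFC.abs_nonneg _)) (commute_abs_sub_right he hf)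

theorem rangeProj_add_le_add_one_sub_mul (he : IsStarProjection e) (hf : IsStarProjection f) :
    rangeProj (e + f) ≤ f + (1 - f) * rangeProj (CFC.abs (e - f)) := by
  have hR := isStarProjection_one_sub_mul_rangeProj_abs_sub he hf
  set R := rangeProj (CFC.abs (e - f)) with hR_def
  have hq : IsStarProjection (f + (1 - f) * R) :=
    hf.add hR (by rw [← mul_assoc, hf.mul_one_sub_self, zero_mul])
  refine rangeProj_add_le he hf hq ?_ (le_add_of_nonneg_right hR.nonneg)
  have habs : IsSelfAdjoint (CFC.abs (e - f)) := .of_nonneg (CFC.abs_nonneg _)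
  have hRe : Commute R e := commute_rangeProj habs (commute_abs_sub_left he hf)
  have hsub : (e - f) * R = e - f := by
    obtain ⟨s, -, -, hs⟩ := exists_isSymmetry_mul_abs_eq (he.isSelfAdjoint.sub hf.isSelfAdjoint)
    rw [← hs, hR_def, mul_assoc, mul_rangeProj_self habs]
  have hRe' : (1 - f) * R * e = (1 - f) * e := by
    have hfe : (1 - f) * e = (1 - f) * (e - f) := by rw [mul_sub, hf.one_sub_mul_self, sub_zero]
    rw [mul_assoc, hRe.eq, ← mul_assoc, hfe, mul_assoc, hsub]
  rw [he.le_iff_mul_eq_right hq, add_mul, hRe']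
  noncomm_ring

theorem exists_isSymmetry_conj_mul_rangeProj_abs_sub (he : IsStarProjection e)
    (hf : IsStarProjection f) :
    ∃ s ∈ Set.centralizer (Set.centralizer {e - f}), IsSymmetry s ∧
      s * (e * rangeProj (CFC.abs (e - f))) * s = (1 - f) * rangeProj (CFC.abs (e - f)) := by
  have hsa : IsSelfAdjoint (e - f) := he.isSelfAdjoint.sub hf.isSelfAdjoint
  obtain ⟨s, hs_mem, hs, hsabs⟩ := exists_isSymmetry_mul_abs_eq hsa
  have hRs : Commute (rangeProj (CFC.abs (e - f))) s :=
    commute_rangeProj (.of_nonneg (CFC.abs_nonneg _)) <|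
      hs_mem _ (Set.mem_centralizer_iff.2 fun _ h => h ▸ (CFC.commute_abs_self _).symm.eq)
  have habs : s * e * CFC.abs (e - f) = (1 - f) * s * CFC.abs (e - f) := by
    rw [mul_assoc, ← (commute_abs_sub_left he hf).eq, ← mul_assoc, hsabs, mul_assoc, hsabs,
      sub_mul, mul_sub, hf.one_sub_mul_self, he.isIdempotentElem.eq]
    noncomm_ring
  refine ⟨s, hs_mem, hs, ?_⟩
  calc s * (e * rangeProj (CFC.abs (e - f))) * s
      = (1 - f) * (s * rangeProj (CFC.abs (e - f))) * s := by
        rw [← mul_assoc, mul_rangeProj_eq_iff.2 habs, mul_assoc (1 - f)]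
    _ = (1 - f) * rangeProj (CFC.abs (e - f)) := by
        rw [← hRs.eq, mul_assoc, mul_assoc _ s s, hs.mul_self, mul_one]

end TwoProjections

section Enlarge

variable {M : VonNeumannAlgebra H} {τ : (H →L[ℂ] H) → ENNReal} {e f : H →L[ℂ] H}

theorem IsSemifiniteTrace.isTauFiniteProjection_rangeProj_add (hτ : IsSemifiniteTrace M τ)
    (he : IsTauFiniteProjection M τ e) (hf : IsTauFiniteProjection M τ f) :
    IsTauFiniteProjection M τ (rangeProj (e + f)) := by
  have he' := he.isStarProjection
  have hf' := hf.isStarProjection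
  have hsa : IsSelfAdjoint (e - f) := he'.isSelfAdjoint.sub hf'.isSelfAdjoint
  have hbi : Set.centralizer (Set.centralizer {e - f}) ⊆ (M : Set (H →L[ℂ] H)) :=
    bicommutant_subset (Set.singleton_subset_iff.2 (sub_mem he.1 hf.1))
  have habs : IsSelfAdjoint (CFC.abs (e - f)) := .of_nonneg (CFC.abs_nonneg _)
  obtain ⟨s, hs_mem, hs, hconj⟩ := exists_isSymmetry_conj_mul_rangeProj_abs_sub he' hf'
  have hle := rangeProj_add_le_add_one_sub_mul he' hf'
  have hfR := isStarProjection_one_sub_mul_rangeProj_abs_sub he' hf'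
  have hRM : rangeProj (CFC.abs (e - f)) ∈ M := rangeProj_mem habs (hbi (abs_mem_bicommutant hsa))
  have heR := commute_rangeProj habs (commute_abs_sub_left he' hf')
  set R := rangeProj (CFC.abs (e - f))
  have heR' : IsStarProjection (e * R) := he'.mul (isStarProjection_rangeProj _) heR.symm
  have heR_le : e * R ≤ e := (heR'.le_iff_mul_eq_right he').2 <| by
    rw [← mul_assoc, he'.isIdempotentElem.eq]
  have hfRM : (1 - f) * R ∈ M := mul_mem (sub_mem (one_mem M) hf.1) hRM
  have hsumM : rangeProj (e + f) ∈ M :=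
    rangeProj_mem (he'.isSelfAdjoint.add hf'.isSelfAdjoint) (add_mem he.1 hf.1)
  refine ⟨hsumM, isProjection_iff_isStarProjection.2 (isStarProjection_rangeProj _), ?_⟩
  calc τ (rangeProj (e + f)) ≤ τ (f + (1 - f) * R) :=
        hτ.mono hsumM (add_mem hf.1 hfRM) (isStarProjection_rangeProj _).nonneg hle
    _ = τ f + τ ((1 - f) * R) := hτ.additive _ _ hf.1 hfRM hf'.nonneg hfR.nonneg
    _ = τ f + τ (e * R) := by
        rw [← hconj, hτ.map_symmetry_conj (hbi hs_mem) hs (mul_mem he.1 hRM) heR']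
    _ ≤ τ f + τ e := by gcongr; exact hτ.mono (mul_mem he.1 hRM) he.1 heR'.nonneg heR_le
    _ < ⊤ := ENNReal.add_lt_top.2 ⟨hf.2.2, he.2.2⟩

theorem IsSemifiniteTrace.exists_le_commute_symmetry (hτ : IsSemifiniteTrace M τ)
    {s : H →L[ℂ] H} (hsM : s ∈ M) (hs : IsSymmetry s) (he : IsTauFiniteProjection M τ e) :
    ∃ p, IsTauFiniteProjection M τ p ∧ e ≤ p ∧ Commute p s ∧
      ∀ t, Commute e t → Commute s t → Commute p t := by
  have hconj := hτ.isTauFiniteProjection_symmetry_conj hsM hs he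
  have hsa : IsSelfAdjoint (e + s * e * s) :=
    he.isStarProjection.isSelfAdjoint.add hconj.isStarProjection.isSelfAdjoint
  refine ⟨rangeProj (e + s * e * s), hτ.isTauFiniteProjection_rangeProj_add he hconj,
    le_rangeProj_add_left he.isStarProjection hconj.isStarProjection,
    commute_rangeProj hsa ?_, fun t het hst => commute_rangeProj hsa ?_⟩
  · calc (e + s * e * s) * s = e * s + s * e * (s * s) := by noncomm_ring
      _ = s * s * e * s + s * e := by rw [hs.mul_self, mul_one, one_mul]
      _ = s * (e + s * e * s) := by noncomm_ring
  · exact het.add_left ((hst.mul_left het).mul_left hst)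

theorem IsSemifiniteTrace.exists_le_commute_symmetries (hτ : IsSemifiniteTrace M τ)
    {S : Set (H →L[ℂ] H)} (hS : S.Finite) (hSM : ∀ s ∈ S, s ∈ M) (hSsymm : ∀ s ∈ S, IsSymmetry s)
    (hScomm : ∀ s ∈ S, ∀ t ∈ S, Commute s t) (he : IsTauFiniteProjection M τ e) :
    ∃ p, IsTauFiniteProjection M τ p ∧ e ≤ p ∧ ∀ s ∈ S, Commute p s := by
  induction S, hS using Set.Finite.induction_on with
  | empty => exact ⟨e, he, le_rfl, by simp⟩
  | @insert s T _ _ ih =>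
    have hT : T ⊆ insert s T := Set.subset_insert s T
    have hsT : s ∈ insert s T := Set.mem_insert s T
    obtain ⟨p, hp, hep, hpT⟩ := ih (fun t ht => hSM t (hT ht)) (fun t ht => hSsymm t (hT ht))
      (fun t ht u hu => hScomm t (hT ht) u (hT hu))
    obtain ⟨q, hq, hpq, hqs, hqt⟩ := hτ.exists_le_commute_symmetry (hSM s hsT) (hSsymm s hsT) hp
    refine ⟨q, hq, hep.trans hpq, Set.forall_mem_insert.2 ⟨hqs, fun t ht => ?_⟩⟩
    exact hqt t (hpT t ht) (hScomm s hsT t (hT ht))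

theorem IsSemifiniteTrace.exists_le_norm_commutator_le (hτ : IsSemifiniteTrace M τ)
    {ι : Type*} [Finite ι] {α : ι → H →L[ℂ] H} (hαM : ∀ j, α j ∈ M)
    (hα : ∀ j, IsSelfAdjoint (α j)) (hαcomm : ∀ i j, Commute (α i) (α j))
    (he : IsTauFiniteProjection M τ e) {ε : ℝ} (hε : 0 < ε) :
    ∃ p, IsTauFiniteProjection M τ p ∧ e ≤ p ∧ ∀ j, ‖p * α j - α j * p‖ ≤ ε := by
  choose S hSfin hSsymm hSα d hd hdist using
    fun j => exists_finite_isSymmetry_norm_sub_lt (hα j) (half_pos hε)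
  have hS_mem : ∀ s ∈ ⋃ j, S j, s ∈ Set.centralizer (Set.centralizer (Set.range α)) := by
    rintro s hs
    obtain ⟨j, hj⟩ := Set.mem_iUnion.1 hs
    exact Set.centralizer_subset (Set.centralizer_subset
      (Set.singleton_subset_iff.2 (Set.mem_range_self j))) (hSα j hj)
  have hS_comm : ∀ s ∈ ⋃ j, S j, ∀ t ∈ ⋃ j, S j, Commute s t := fun s hs t ht =>
    Set.centralizer_centralizer_comm_of_comm
      (Set.forall_mem_range.2 fun i => Set.forall_mem_range.2 (hαcomm i)) s (hS_mem s hs) t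
      (hS_mem t ht)
  obtain ⟨p, hp, hep, hpS⟩ := hτ.exists_le_commute_symmetries (Set.finite_iUnion hSfin)
    (fun s hs => bicommutant_subset (Set.range_subset_iff.2 hαM) (hS_mem s hs))
    (fun s hs => by obtain ⟨j, hj⟩ := Set.mem_iUnion.1 hs; exact hSsymm j s hj) hS_comm he
  refine ⟨p, hp, hep, fun j => ?_⟩
  have hpd : Commute p (d j) := Algebra.commute_of_mem_adjoin_of_forall_mem_commute (hd j)
    fun s hs => hpS s (Set.mem_iUnion_of_mem j hs)
  linarith [norm_commutator_le (a := α j) hp.isStarProjection.norm_le hpd, hdist j]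

end Enlarge

section Exhaust

variable {M : VonNeumannAlgebra H} {τ : (H →L[ℂ] H) → ENNReal}

theorem rangeProj_posPart_mul {x : H →L[ℂ] H} (hx : IsSelfAdjoint x) :
    rangeProj x⁺ * x = x⁺ := by
  calc rangeProj x⁺ * x = rangeProj x⁺ * (x⁺ - x⁻) := by rw [CFC.posPart_sub_negPart x]
    _ = x⁺ := by rw [mul_sub, rangeProj_mul_self, rangeProj_posPart_mul_negPart, sub_zero]

theorem real_smul_mem {x : H →L[ℂ] H} (c : ℝ) (hx : x ∈ M) : c • x ∈ M :=
  M.toStarSubalgebra.smul_mem hx (c : ℂ)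

-- `rangeProj (y - δ)⁺` is the spectral projection of `y` for `(δ, ∞)`.
theorem smul_rangeProj_posPart_sub_le {y : H →L[ℂ] H} (hy : 0 ≤ y) (δ : ℝ) :
    δ • rangeProj (y - algebraMap ℝ _ δ)⁺ ≤ y := by
  set x := y - algebraMap ℝ (H →L[ℂ] H) δ with hx_def
  have hx : IsSelfAdjoint x := (IsSelfAdjoint.of_nonneg hy).sub (.algebraMap _ (.all _))
  set z := rangeProj x⁺ with hz_def
  have hz : IsStarProjection z := isStarProjection_rangeProj _
  have hxy : x * y = y * x := ((Commute.refl y).sub_left (Algebra.commutes δ y)).eq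
  have hzy : Commute y z := rangeProj_posPart_mem_bicommutant x y fun _ h => h ▸ hxy
  have hcut : z * y = δ • z + x⁺ := by
    rw [← rangeProj_posPart_mul hx, ← hz_def, hx_def, mul_sub, ← Algebra.commutes,
      ← Algebra.smul_def, add_sub_cancel]
  calc δ • z ≤ δ • z + x⁺ := le_add_of_nonneg_right (CFC.posPart_nonneg x)
    _ = z * y := hcut.symm
    _ ≤ z * y + star (1 - z) * y * (1 - z) :=
        le_add_of_nonneg_right (star_left_conjugate_nonneg hy _)
    _ = y := by
        rw [hz.one_sub.isSelfAdjoint.star_eq, mul_assoc, ((Commute.one_right y).sub_right hzy).eq,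
          ← mul_assoc, hz.one_sub.isIdempotentElem.eq]
        noncomm_ring

theorem rangeProj_posPart_sub_ne_zero {y : H →L[ℂ] H} (hy : 0 ≤ y) {δ : ℝ} (hδ : 0 ≤ δ)
    (hδy : δ < ‖y‖) : rangeProj (y - algebraMap ℝ _ δ)⁺ ≠ 0 := by
  intro h
  have hpos : (y - algebraMap ℝ (H →L[ℂ] H) δ)⁺ = 0 := by
    rw [← rangeProj_mul_self (y - algebraMap ℝ _ δ)⁺, h, zero_mul]
  have hle : y ≤ algebraMap ℝ _ δ := sub_nonpos.1 <|
    (CFC.posPart_eq_zero_iff _ ((IsSelfAdjoint.of_nonneg hy).sub (.algebraMap _ (.all _)))).1 hpos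
  exact hδy.not_ge ((CStarAlgebra.norm_le_iff_le_algebraMap y hδ hy).2 hle)

theorem IsSemifiniteTrace.exists_isTauFiniteProjection_le (hτ : IsSemifiniteTrace M τ)
    {q : H →L[ℂ] H} (hqM : q ∈ M) (hq : IsStarProjection q) (hq0 : q ≠ 0) :
    ∃ z, IsTauFiniteProjection M τ z ∧ z ≠ 0 ∧ z ≤ q := by
  obtain ⟨y, hyM, hy, hyq, hy0, hτy⟩ := hτ.semifinite q hqM hq.nonneg hq0
  have hδ : 0 < ‖y‖ / 2 := half_pos (norm_pos_iff.2 hy0)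
  set x := y - algebraMap ℝ (H →L[ℂ] H) (‖y‖ / 2) with hx
  have hzy : (‖y‖ / 2) • rangeProj x⁺ ≤ y := smul_rangeProj_posPart_sub_le hy _
  have hz := isStarProjection_rangeProj x⁺
  have hxM : x ∈ M := by
    rw [hx, Algebra.algebraMap_eq_smul_one]
    exact sub_mem hyM (real_smul_mem _ (one_mem M))
  have hzM : rangeProj x⁺ ∈ M := bicommutant_subset (Set.singleton_subset_iff.2 hxM)
    (rangeProj_posPart_mem_bicommutant x)
  have hτz : τ ((‖y‖ / 2) • rangeProj x⁺) < ⊤ := lt_of_le_of_lt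
    (hτ.mono (real_smul_mem _ hzM) hyM (smul_nonneg hδ.le hz.nonneg) hzy) hτy
  rw [hτ.homogeneous _ _ hδ.le hzM hz.nonneg] at hτz
  refine ⟨rangeProj x⁺, ⟨hzM, isProjection_iff_isStarProjection.2 hz, ?_⟩,
    rangeProj_posPart_sub_ne_zero hy hδ.le (half_lt_self (norm_pos_iff.2 hy0)),
    isStarProjection_le_of_smul_le hz hq hδ (hzy.trans hyq)⟩
  exact ENNReal.lt_top_of_mul_ne_top_right hτz.ne (ENNReal.ofReal_pos.2 hδ).ne'

theorem IsSemifiniteTrace.exists_seq_isTauFiniteProjection (hτ : IsSemifiniteTrace M τ)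
    (hσ : SigmaFinite M) :
    ∃ e : ℕ → H →L[ℂ] H, (∀ k, IsTauFiniteProjection M τ (e k)) ∧
      ∀ q ∈ M, IsStarProjection q → (∀ k, q * e k = 0) → q = 0 := by
  obtain ⟨S, ⟨hST, hS_orth⟩, hSmax⟩ := exists_maximal_pairwise
    {p | IsTauFiniteProjection M τ p ∧ p ≠ 0} (fun p q => p * q = 0)
  have hS_count : S.Countable := hσ S
    (fun p hp => ⟨(hST hp).1.1, (hST hp).1.2.1, (hST hp).2⟩) fun p hp q hq => hS_orth hp hq
  obtain ⟨e, he⟩ := (hS_count.insert 0).exists_eq_range ⟨0, Set.mem_insert _ _⟩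
  have he_fin : ∀ p ∈ insert 0 S, IsTauFiniteProjection M τ p := Set.forall_mem_insert.2
    ⟨hτ.isTauFiniteProjection_zero, fun p hp => (hST hp).1⟩
  refine ⟨e, fun k => he_fin _ (he ▸ Set.mem_range_self k), fun q hqM hq hqe => ?_⟩
  by_contra hq0
  obtain ⟨z, hz, hz0, hzq⟩ := hτ.exists_isTauFiniteProjection_le hqM hq hq0
  have hzS : ∀ p ∈ S, z * p = 0 := fun p hp => by
    obtain ⟨k, rfl⟩ : p ∈ Set.range e := he ▸ Set.mem_insert_of_mem 0 hp
    rw [← (hz.isStarProjection.le_iff_mul_eq_left hq).1 hzq, mul_assoc, hqe, mul_zero]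
  have hSz : ∀ p ∈ S, p * z = 0 := fun p hp => by
    simpa [hz.2.1.2, (hST hp).1.2.1.2] using congrArg star (hzS p hp)
  have hz_mem : z ∈ S := hSmax
    ⟨Set.insert_subset ⟨hz, hz0⟩ hST, hS_orth.insert fun p hp _ => ⟨hzS p hp, hSz p hp⟩⟩
    (Set.subset_insert z S) (Set.mem_insert z S)
  exact hz0 (hz.2.1.1 ▸ hzS z hz_mem)

theorem exists_tendsto_apply_of_monotone {ι : Type*} [Preorder ι] {p : ι → H →L[ℂ] H}
    (hp : ∀ i, IsStarProjection (p i)) (hmono : Monotone p) :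
    ∃ Q : H →L[ℂ] H, IsStarProjection Q ∧ ∀ ξ, Tendsto (fun i => p i ξ) atTop (𝓝 (Q ξ)) := by
  choose hproj heq using fun i => isStarProjection_iff_eq_starProjection_range.1 (hp i)
  have hrange : Monotone fun i => (p i).range := by
    rintro i j hij _ ⟨ξ, rfl⟩
    exact ⟨p i ξ, DFunLike.congr_fun (((hp i).le_iff_mul_eq_right (hp j)).1 (hmono hij)) ξ⟩
  refine ⟨(⨆ i, (p i).range).topologicalClosure.starProjection,
    isStarProjection_starProjection, fun ξ => ?_⟩
  refine (Submodule.starProjection_tendsto_closure_iSup _ hrange ξ).congr fun i => ?_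
  rw [← heq]

theorem mem_of_tendsto_apply {ι : Type*} {l : Filter ι} [l.NeBot] {T : ι → H →L[ℂ] H}
    {Q : H →L[ℂ] H} (hT : ∀ i, T i ∈ M) (hQ : ∀ ξ, Tendsto (fun i => T i ξ) l (𝓝 (Q ξ))) :
    Q ∈ M := by
  rw [← VonNeumannAlgebra.commutant_commutant M, VonNeumannAlgebra.mem_commutant_iff]
  intro y hy
  ext ξ
  refine tendsto_nhds_unique ((y.continuous.tendsto _).comp (hQ ξ)) ((hQ (y ξ)).congr fun i => ?_)
  exact DFunLike.congr_fun (VonNeumannAlgebra.mem_commutant_iff.1 hy (T i) (hT i)) ξ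

theorem tendsto_apply_self_of_monotone {e p : ℕ → H →L[ℂ] H}
    (he : ∀ q ∈ M, IsStarProjection q → (∀ k, q * e k = 0) → q = 0)
    (hpM : ∀ k, p k ∈ M) (hp : ∀ k, IsStarProjection (p k)) (hmono : Monotone p)
    (hpe : ∀ k, p k * e k = e k) (ξ : H) : Tendsto (fun k => p k ξ) atTop (𝓝 ξ) := by
  obtain ⟨Q, hQ, hlim⟩ := exists_tendsto_apply_of_monotone hp hmono
  have hQe : ∀ k, Q * e k = e k := fun k => by
    ext η
    refine tendsto_nhds_unique (hlim (e k η)) (tendsto_const_nhds.congr' ?_)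
    filter_upwards [eventually_ge_atTop k] with l hl
    have hle : p l * e k = e k := by
      rw [← hpe k, ← mul_assoc, ((hp k).le_iff_mul_eq_right (hp l)).1 (hmono hl)]
    exact (DFunLike.congr_fun hle η).symm
  have hQ_one : 1 - Q = 0 := he _ (sub_mem (one_mem M) (mem_of_tendsto_apply hpM hlim)) hQ.one_sub
    fun k => by rw [sub_mul, one_mul, hQe, sub_self]
  simpa [← sub_eq_zero.1 hQ_one] using hlim ξ

end Exhaust

theorem IsSemifiniteTrace.exists_monotone_norm_commutator_le {M : VonNeumannAlgebra H}
    {τ : (H →L[ℂ] H) → ENNReal} (hτ : IsSemifiniteTrace M τ)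
    {ι : Type*} [Finite ι] {α : ι → H →L[ℂ] H} (hαM : ∀ j, α j ∈ M)
    (hα : ∀ j, IsSelfAdjoint (α j)) (hαcomm : ∀ i j, Commute (α i) (α j))
    {e : ℕ → H →L[ℂ] H} (he : ∀ k, IsTauFiniteProjection M τ (e k)) :
    ∃ p : ℕ → H →L[ℂ] H, (∀ k, IsTauFiniteProjection M τ (p k)) ∧ Monotone p ∧
      (∀ k, e k ≤ p k) ∧ ∀ k j, ‖p k * α j - α j * p k‖ ≤ 1 / ((k : ℝ) + 1) := by
  have hstep : ∀ (k : ℕ) (q : {q // IsTauFiniteProjection M τ q}),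
      ∃ p : {p // IsTauFiniteProjection M τ p}, q.1 ≤ p.1 ∧ e k ≤ p.1 ∧
        ∀ j, ‖p.1 * α j - α j * p.1‖ ≤ 1 / ((k : ℝ) + 1) := fun k q => by
    obtain ⟨p, hp, hle, hcomm⟩ := hτ.exists_le_norm_commutator_le hαM hα hαcomm
      (hτ.isTauFiniteProjection_rangeProj_add q.2 (he k)) (Nat.one_div_pos_of_nat (n := k))
    exact ⟨⟨p, hp⟩, (le_rangeProj_add_left q.2.isStarProjection (he k).isStarProjection).trans hle,
      (le_rangeProj_add_right q.2.isStarProjection (he k).isStarProjection).trans hle, hcomm⟩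
  choose F hF_mono hF_e hF_comm using hstep
  let P : ℕ → {q // IsTauFiniteProjection M τ q} := fun k =>
    Nat.rec ⟨0, hτ.isTauFiniteProjection_zero⟩ F k
  exact ⟨fun k => (P (k + 1)).1, fun k => (P (k + 1)).2,
    monotone_nat_of_le_succ fun k => hF_mono (k + 1) (P (k + 1)),
    fun k => hF_e k (P k), fun k => hF_comm k (P k)⟩

end VNA

open VNA in
theorem statement_6_general {H : Type*} [NormedAddCommGroup H] [InnerProductSpace ℂ H]
    [CompleteSpace H] (M : VonNeumannAlgebra H) (hσ : SigmaFinite M)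
    (τ : (H →L[ℂ] H) → ENNReal) (hτ : IsSemifiniteTrace M τ)
    (n : ℕ) (α : Fin n → (H →L[ℂ] H)) (hα : IsCommutingSelfAdjointTuple M α) :
    ∃ p : ℕ → (H →L[ℂ] H),
      (∀ k, IsTauFiniteProjection M τ (p k)) ∧
      (∀ k, p (k + 1) * p k = p k) ∧
      (∀ ξ : H, Tendsto (fun k => p k ξ) atTop (𝓝 ξ)) ∧
      Tendsto (fun k => commNorm α (p k)) atTop (𝓝 0) := by
  obtain ⟨e, he_fin, he⟩ := hτ.exists_seq_isTauFiniteProjection hσ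
  obtain ⟨p, hp, hmono, hep, hcomm⟩ :=
    hτ.exists_monotone_norm_commutator_le hα.1 hα.2.1 hα.2.2 he_fin
  have hp' := fun k => (hp k).isStarProjection
  refine ⟨p, hp, fun k => ((hp' k).le_iff_mul_eq_right (hp' _)).1 (hmono k.le_succ),
    tendsto_apply_self_of_monotone he (fun k => (hp k).1) hp' hmono fun k =>
      ((he_fin k).isStarProjection.le_iff_mul_eq_right (hp' k)).1 (hep k), ?_⟩
  exact squeeze_zero (fun k => Real.iSup_nonneg fun j => norm_nonneg _)
    (fun k => Real.iSup_le (hcomm k) (by positivity)) tendsto_one_div_add_atTop_nhds_zero_nat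

open VNA in
/-- There is an increasing sequence of τ-finite projections converging
strongly to `1` whose commutators with `α` tend to `0` in norm. -/
theorem statement_6 {H : Type*} [NormedAddCommGroup H] [InnerProductSpace ℂ H]
    [CompleteSpace H] (M : VonNeumannAlgebra H) (hσ : SigmaFinite M)
    (τ : (H →L[ℂ] H) → ENNReal) (hτ : IsFNSTrace M τ)
    (n : ℕ) (hn : 0 < n) (α : Fin n → (H →L[ℂ] H))
    (hα : IsCommutingSelfAdjointTuple M α) :
    ∃ p : ℕ → (H →L[ℂ] H),
      (∀ k, IsTauFiniteProjection M τ (p k)) ∧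
      (∀ k, p (k + 1) * p k = p k) ∧
      (∀ ξ : H, Filter.Tendsto (fun k => p k ξ) Filter.atTop (nhds ξ)) ∧
      Filter.Tendsto (fun k => commNorm α (p k)) Filter.atTop (nhds 0) :=
  statement_6_general M hσ τ hτ.isSemifiniteTrace n α hα
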